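/- The set 𝔖 of regular semi-simple elements of s_{n+1} that match to signature (n,0) has exactly two connected components, and these are interchanged by the conjugation action of any g ∈ GL_n(ℝ) with det(g) < 0. -/

import Mathlib

open Matrix MeasureTheory

noncomputable section

/-- The space `s_{n+1} = {y ∈ M_{n+1}(ℂ) | y + ȳ = 0}` (entrywise conjugation). -/
def sSet (n : ℕ) : Set (Matrix (Fin (n+1)) (Fin (n+1)) ℂ) :=
  {y | y + y.map (starRingEnd ℂ) = 0}

/-- The embedding `g ↦ diag(g, 1)` of `n×n` matrices into `(n+1)×(n+1)` matrices. -/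
def dgC {n : ℕ} (g : Matrix (Fin n) (Fin n) ℂ) : Matrix (Fin (n+1)) (Fin (n+1)) ℂ :=
  Matrix.reindex finSumFinEquiv finSumFinEquiv
    (Matrix.fromBlocks g 0 0 (1 : Matrix (Fin 1) (Fin 1) ℂ))

/-- The real version of `diag(H, 1)`. -/
def dgR {n : ℕ} (H : Matrix (Fin n) (Fin n) ℝ) : Matrix (Fin (n+1)) (Fin (n+1)) ℝ :=
  Matrix.reindex finSumFinEquiv finSumFinEquiv
    (Matrix.fromBlocks H 0 0 (1 : Matrix (Fin 1) (Fin 1) ℝ))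

/-- The action of `GL_n(ℝ)` on `(n+1)×(n+1)` complex matrices:
`g · y = diag(g,1) y diag(g,1)⁻¹`. -/
def mact {n : ℕ} (g : GL (Fin n) ℝ) (y : Matrix (Fin (n+1)) (Fin (n+1)) ℂ) :
    Matrix (Fin (n+1)) (Fin (n+1)) ℂ :=
  dgC (((g : Matrix (Fin n) (Fin n) ℝ)).map (fun r : ℝ => (r : ℂ))) * y *
    dgC ((((g⁻¹ : GL (Fin n) ℝ) : Matrix (Fin n) (Fin n) ℝ)).map (fun r : ℝ => (r : ℂ)))

/-- The upper-left `n×n` block `y₀` of `y`. -/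
def blk0 {n : ℕ} (y : Matrix (Fin (n+1)) (Fin (n+1)) ℂ) : Matrix (Fin n) (Fin n) ℂ :=
  Matrix.of fun i j => y i.castSucc j.castSucc

/-- The last-column block `v` of `y` (a column vector). -/
def blkv {n : ℕ} (y : Matrix (Fin (n+1)) (Fin (n+1)) ℂ) : Fin n → ℂ :=
  fun i => y i.castSucc (Fin.last n)

/-- The last-row block `w` of `y` (a row vector). -/
def blkw {n : ℕ} (y : Matrix (Fin (n+1)) (Fin (n+1)) ℂ) : Fin n → ℂ :=
  fun j => y (Fin.last n) j.castSucc

/-- The lower-right entry `d` of `y`. -/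
def blkd {n : ℕ} (y : Matrix (Fin (n+1)) (Fin (n+1)) ℂ) : ℂ :=
  y (Fin.last n) (Fin.last n)

/-- The spanning characterization of regular semi-simplicity:
`ℂ[y₀]·v = ℂⁿ` and `w·ℂ[y₀] = ℂ_n`. -/
def RSspan {n : ℕ} (y : Matrix (Fin (n+1)) (Fin (n+1)) ℂ) : Prop :=
  Submodule.span ℂ {u : Fin n → ℂ | ∃ k : ℕ, u = (blk0 y ^ k) *ᵥ blkv y} = ⊤ ∧
  Submodule.span ℂ {u : Fin n → ℂ | ∃ k : ℕ, u = blkw y ᵥ* (blk0 y ^ k)} = ⊤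

/-- The Jacquet–Rallis invariant `Inv(y) = (char(y₀;T), w v, w y₀ v, …, w y₀^{n-1} v, d)`. -/
def InvS {n : ℕ} (y : Matrix (Fin (n+1)) (Fin (n+1)) ℂ) :
    Polynomial ℂ × (Fin n → ℂ) × ℂ :=
  ((blk0 y).charpoly, fun k => blkw y ⬝ᵥ ((blk0 y ^ (k : ℕ)) *ᵥ blkv y), blkd y)

/-- The Lie algebra `u(n+1)` of the compact unitary group: `x* = -x`. -/
def uSet (n : ℕ) : Set (Matrix (Fin (n+1)) (Fin (n+1)) ℂ) :=
  {x | xᴴ = -x}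

/-- Regular semi-simplicity on the unitary side: `ℂ[x₀]·u = ℂⁿ`. -/
def RSspanU {n : ℕ} (x : Matrix (Fin (n+1)) (Fin (n+1)) ℂ) : Prop :=
  Submodule.span ℂ {u : Fin n → ℂ | ∃ k : ℕ, u = (blk0 x ^ k) *ᵥ blkv x} = ⊤

/-- The invariant on the unitary side,
`Inv(x) = (char(x₀;T), -(u,u), …, -(u, x₀^{n-1} u), d)`, with the standard
positive definite hermitian form `(a,b) = star a ⬝ᵥ b`. -/
def InvU {n : ℕ} (x : Matrix (Fin (n+1)) (Fin (n+1)) ℂ) :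
    Polynomial ℂ × (Fin n → ℂ) × ℂ :=
  ((blk0 x).charpoly,
   fun k => -(star (blkv x) ⬝ᵥ ((blk0 x ^ (k : ℕ)) *ᵥ blkv x)),
   blkd x)

/-- `y` matches to signature `(n,0)`: there is a matching regular semi-simple element
of `u(n+1)` (the positive definite case). -/
def MatchesN0 {n : ℕ} (y : Matrix (Fin (n+1)) (Fin (n+1)) ℂ) : Prop :=
  ∃ x ∈ uSet n, RSspanU x ∧ InvS y = InvU x

/-- The real "arrow" matrix with diagonal `(λ₁,…,λₙ,d)` and last row/column `μ₁,…,μₙ`. -/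
def arrow {n : ℕ} (lam mu : Fin n → ℝ) (d : ℝ) : Matrix (Fin (n+1)) (Fin (n+1)) ℝ :=
  Matrix.reindex finSumFinEquiv finSumFinEquiv
    (Matrix.fromBlocks (Matrix.diagonal lam)
      (Matrix.of fun i (_ : Fin 1) => mu i)
      (Matrix.of fun (_ : Fin 1) j => mu j)
      (Matrix.of fun _ _ => d))

/-- `i·A` for a real matrix `A`, viewed inside `M_{n+1}(ℂ)`. -/
def iM {n : ℕ} (A : Matrix (Fin (n+1)) (Fin (n+1)) ℝ) : Matrix (Fin (n+1)) (Fin (n+1)) ℂ :=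
  Complex.I • (A.map fun r : ℝ => (r : ℂ))

/-- The element `i·M` of `s_{n+1}` attached to arrow data. -/
def iArrow {n : ℕ} (lam mu : Fin n → ℝ) (d : ℝ) : Matrix (Fin (n+1)) (Fin (n+1)) ℂ :=
  iM (arrow lam mu d)

/-- A real-valued polynomial function on a real vector space: an element of the
subalgebra of functions generated by the linear functionals. -/
def IsPolyFun {V : Type*} [AddCommGroup V] [Module ℝ V] (f : V → ℝ) : Prop :=
  f ∈ Algebra.adjoin ℝ (Set.range fun l : V →ₗ[ℝ] ℝ => ⇑l)

/-- Zariski-closed subsets of a real vector space: common zero loci of families of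
polynomial functions. -/
def IsRZClosed {V : Type*} [AddCommGroup V] [Module ℝ V] (s : Set V) : Prop :=
  ∃ T : Set (V → ℝ), (∀ f ∈ T, IsPolyFun f) ∧ s = {x | ∀ f ∈ T, f x = 0}

/-- Regular semi-simplicity as defined in the paper: trivial `GL_n(ℝ)`-stabilizer
and Zariski-closed orbit. -/
def RSdef {n : ℕ} (y : Matrix (Fin (n+1)) (Fin (n+1)) ℂ) : Prop :=
  (∀ g : GL (Fin n) ℝ, mact g y = y → g = 1) ∧
  IsRZClosed {z | ∃ g : GL (Fin n) ℝ, z = mact g y}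

/-- The set `𝔖` of regular semi-simple elements of `s_{n+1}` matching signature `(n,0)`. -/
def frakS (n : ℕ) : Set (Matrix (Fin (n+1)) (Fin (n+1)) ℂ) :=
  {y | y ∈ sSet n ∧ RSspan y ∧ MatchesN0 y}

/-!
Writing `v` for the last column and `y₀` for the upper-left block of `y`, the determinant
`det (v, y₀ v, …, y₀ ^ (n - 1) v)` is, up to a power of `i`, a real continuous function on `𝔖`.
It vanishes nowhere, because `v` is cyclic for `y₀`, and `g ∈ GL_n(ℝ)` multiplies it by `det g`.

Conversely each sign gives a single component. Diagonalizing the Hermitian matrix `-i x₀` of a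
matching `x ∈ u(n+1)` shows that `y` has the invariants of an arrow matrix with
`λ₁ < ⋯ < λₙ` and all `μᵢ > 0`. Two cyclic pairs with equal invariants are conjugate by the
quotient of their Krylov matrices, so `𝔖` is the image of `GL_n(ℝ) × (convex cell)`, on which the
sign of the determinant above is that of `det g`; and `GL_n(ℝ)` has one connected piece for each
sign of `det`, since `SL_n(ℝ)` is generated by transvections.
-/

section SignComponents

variable {X : Type*} [TopologicalSpace X] {S : Set X} {f : X → ℝ} {x z : X}

theorem sign_eq_of_mem_connectedComponentIn (hf : ContinuousOn f S) (hf₀ : ∀ x ∈ S, f x ≠ 0)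
    (hz : z ∈ connectedComponentIn S x) : SignType.sign (f z) = SignType.sign (f x) := by
  set C := connectedComponentIn S x
  have hCS : C ⊆ S := connectedComponentIn_subset S x
  have hx : x ∈ C := mem_connectedComponentIn (connectedComponentIn_nonempty_iff.1 ⟨z, hz⟩)
  have hC₀ : (0 : ℝ) ∉ f '' C := fun ⟨w, hw, hw₀⟩ => hf₀ w (hCS hw) hw₀
  have hconn : (f '' C).OrdConnected :=
    (isPreconnected_connectedComponentIn.image f (hf.mono hCS)).ordConnected
  have hxC := Set.mem_image_of_mem f hx
  have hzC := Set.mem_image_of_mem f hz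
  rcases (hf₀ x (hCS hx)).lt_or_gt with hfx | hfx <;>
    rcases (hf₀ z (hCS hz)).lt_or_gt with hfz | hfz
  · rw [sign_neg hfx, sign_neg hfz]
  · exact absurd (hconn.out hxC hzC ⟨hfx.le, hfz.le⟩) hC₀
  · exact absurd (hconn.out hzC hxC ⟨hfz.le, hfx.le⟩) hC₀
  · rw [sign_pos hfx, sign_pos hfz]

theorem connectedComponentIn_eq_setOf_sign_eq (hf : ContinuousOn f S) (hf₀ : ∀ x ∈ S, f x ≠ 0)
    (hS : ∀ s : SignType, IsPreconnected {z ∈ S | SignType.sign (f z) = s}) (hx : x ∈ S) :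
    connectedComponentIn S x = {z ∈ S | SignType.sign (f z) = SignType.sign (f x)} :=
  Set.Subset.antisymm
    (fun _ hz => ⟨connectedComponentIn_subset S x hz,
      sign_eq_of_mem_connectedComponentIn hf hf₀ hz⟩)
    ((hS _).subset_connectedComponentIn ⟨hx, rfl⟩ fun _ hz => hz.1)

theorem ncard_connectedComponentIn_eq_two (hf : ContinuousOn f S) (hf₀ : ∀ x ∈ S, f x ≠ 0)
    (hS : ∀ s : SignType, IsPreconnected {z ∈ S | SignType.sign (f z) = s})
    (hx : x ∈ S) (hfx : 0 < f x) (hz : z ∈ S) (hfz : f z < 0) :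
    {C | ∃ y ∈ S, C = connectedComponentIn S y}.ncard = 2 := by
  have hcomp {y : X} (hy : y ∈ S) := connectedComponentIn_eq_setOf_sign_eq hf hf₀ hS hy
  have hpair : {C | ∃ y ∈ S, C = connectedComponentIn S y} =
      {connectedComponentIn S x, connectedComponentIn S z} := by
    ext C
    constructor
    · rintro ⟨y, hy, rfl⟩
      rcases (hf₀ y hy).lt_or_gt with hfy | hfy
      · exact Or.inr <| Set.mem_singleton_iff.2 <| by
          rw [hcomp hy, hcomp hz, sign_neg hfy, sign_neg hfz]
      · exact Or.inl (by rw [hcomp hy, hcomp hx, sign_pos hfy, sign_pos hfx])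
    · rintro (rfl | rfl)
      exacts [⟨x, hx, rfl⟩, ⟨z, hz, rfl⟩]
  rw [hpair, Set.ncard_pair]
  intro h
  have hsign := sign_eq_of_mem_connectedComponentIn hf hf₀ (h ▸ mem_connectedComponentIn hx)
  rw [sign_pos hfx, sign_neg hfz] at hsign
  exact absurd hsign (by decide)

end SignComponents

section Convexity

theorem convex_setOf_strictMono {ι : Type*} [Preorder ι] : Convex ℝ {f : ι → ℝ | StrictMono f} := by
  intro f hf g hg a b ha hb hab i j hij
  rcases ha.eq_or_lt with rfl | ha
  · obtain rfl : b = 1 := by simpa using hab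
    simpa using hg hij
  · exact add_lt_add_of_lt_of_le (mul_lt_mul_of_pos_left (hf hij) ha)
      (mul_le_mul_of_nonneg_left (hg hij).le hb)

end Convexity

section LinearGroups

variable {ι : Type*} [Fintype ι] [DecidableEq ι]

theorem diag2n_eq_transvection_mul {F : Type*} [Field F] {i j : ι} (hij : i ≠ j) (a : F)
    (ha : a ≠ 0) :
    SpecialLinearGroup.diag2n hij a ha =
      SpecialLinearGroup.transvection hij (-a) * SpecialLinearGroup.transvection hij.symm (a⁻¹ - 1)
        * SpecialLinearGroup.transvection hij 1
        * SpecialLinearGroup.transvection hij.symm (a - 1) := by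
  apply Subtype.ext
  change diagonal _ = Matrix.transvection i j (-a) * Matrix.transvection j i (a⁻¹ - 1) *
    Matrix.transvection i j 1 * Matrix.transvection j i (a - 1)
  ext k l
  simp only [Matrix.transvection, mul_add, add_mul, mul_one, one_mul, single_mul_single_same,
    add_zero, single_mul_single_of_ne _ _ _ _ hij, single_mul_single_of_ne _ _ _ _ hij.symm,
    Matrix.add_apply, single_apply, diagonal_apply, one_apply]
  split_ifs <;> grind

theorem transvection_mem_connectedComponentOfOne {i j : ι} (hij : i ≠ j) (c : ℝ) :
    SpecialLinearGroup.transvection hij c ∈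
      Subgroup.connectedComponentOfOne (Matrix.SpecialLinearGroup ι ℝ) := by
  have hsingle : Continuous fun t : ℝ => Matrix.single i j t :=
    (singleLinearMap ℝ i j : ℝ →ₗ[ℝ] Matrix ι ι ℝ).continuous_of_finiteDimensional
  have hcont : Continuous fun t : ℝ => SpecialLinearGroup.transvection hij t :=
    (continuous_const.add hsingle).subtype_mk _
  exact (isPreconnected_range hcont).subset_connectedComponent
    ⟨0, SpecialLinearGroup.transvection_coeff_zero hij⟩ ⟨c, rfl⟩

instance preconnectedSpace_specialLinearGroup :
    PreconnectedSpace (Matrix.SpecialLinearGroup ι ℝ) := by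
  have hmem (A : Matrix.SpecialLinearGroup ι ℝ) :
      A ∈ Subgroup.connectedComponentOfOne (Matrix.SpecialLinearGroup ι ℝ) := by
    rcases subsingleton_or_nontrivial ι with hι | hι
    · rw [Subsingleton.elim A 1]
      exact one_mem _
    refine SpecialLinearGroup.diagonal_transvection_induction' _ A (fun i j hij c hc => ?_)
      (fun i j hij c => transvection_mem_connectedComponentOfOne hij c)
      fun _ _ hA hB => mul_mem hA hB
    rw [diag2n_eq_transvection_mul hij c hc]
    iterate 3 refine mul_mem ?_ (transvection_mem_connectedComponentOfOne _ _)
    exact transvection_mem_connectedComponentOfOne _ _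
  exact ⟨Set.eq_univ_of_forall hmem ▸ isPreconnected_connectedComponent⟩

theorem continuous_scalar_exp : Continuous fun c : ℝ =>
    GeneralLinearGroup.scalar ι (Units.mk0 (Real.exp c) (Real.exp_ne_zero c)) := by
  have hexp : Continuous fun c : ℝ => Units.mk0 (Real.exp c) (Real.exp_ne_zero c) :=
    Units.isEmbedding_val₀.continuous_iff.2 Real.continuous_exp
  have hscalar : Continuous (scalar ι : ℝ →+* Matrix ι ι ℝ) :=
    (continuous_pi fun _ => continuous_id).matrix_diagonal
  exact (hscalar.units_map (scalar ι : ℝ →+* Matrix ι ι ℝ).toMonoidHom).comp hexp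

theorem exists_scalar_exp_mul_toGL_eq [Nonempty ι] {g : GL ι ℝ} (hg : g ∈ GLPos ι ℝ) :
    ∃ (c : ℝ) (A : Matrix.SpecialLinearGroup ι ℝ),
      GeneralLinearGroup.scalar ι (Units.mk0 (Real.exp c) (Real.exp_ne_zero c)) *
        SpecialLinearGroup.toGL A = g := by
  rw [mem_glpos] at hg
  let c := Real.log g.val.det / Fintype.card ι
  let u := Units.mk0 (Real.exp c) (Real.exp_ne_zero c)
  have hu : u ^ Fintype.card ι = GeneralLinearGroup.det g := by
    ext
    have hcard : (Fintype.card ι : ℝ) ≠ 0 := by simp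
    simpa [u, c, ← Real.exp_nat_mul, mul_div_cancel₀ _ hcard] using Real.exp_log hg
  have hdet : ((GeneralLinearGroup.scalar ι u)⁻¹ * g).val.det = 1 := by
    have hunit : GeneralLinearGroup.det ((GeneralLinearGroup.scalar ι u)⁻¹ * g) = 1 := by
      rw [map_mul, map_inv, GeneralLinearGroup.det_scalar, hu, inv_mul_cancel]
    exact congrArg Units.val hunit
  refine ⟨c, ⟨_, hdet⟩, ?_⟩
  have htoGL : SpecialLinearGroup.toGL ⟨_, hdet⟩ = (GeneralLinearGroup.scalar ι u)⁻¹ * g :=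
    Units.ext rfl
  rw [htoGL, mul_inv_cancel_left]

theorem isPreconnected_GLPos : IsPreconnected (GLPos ι ℝ : Set (GL ι ℝ)) := by
  rcases isEmpty_or_nonempty ι with hι | hι
  · exact Set.subsingleton_of_subsingleton.isPreconnected
  let f : ℝ × Matrix.SpecialLinearGroup ι ℝ → GL ι ℝ := fun p =>
    GeneralLinearGroup.scalar ι (Units.mk0 (Real.exp p.1) (Real.exp_ne_zero p.1)) *
      SpecialLinearGroup.toGL p.2
  have hf : Continuous f := (continuous_scalar_exp.comp continuous_fst).mul
    (SpecialLinearGroup.continuous_toGL.comp continuous_snd)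
  have hrange : (GLPos ι ℝ : Set (GL ι ℝ)) = Set.range f := by
    ext g
    constructor
    · intro hg
      obtain ⟨c, A, rfl⟩ := exists_scalar_exp_mul_toGL_eq hg
      exact ⟨(c, A), rfl⟩
    · rintro ⟨⟨c, A⟩, rfl⟩
      rw [SetLike.mem_coe, mem_glpos, map_mul, GeneralLinearGroup.det_scalar,
        SpecialLinearGroup.coeToGL_det, mul_one]
      simpa using pow_pos (Real.exp_pos c) _
  rw [hrange]
  exact isPreconnected_range hf

theorem isPreconnected_setOf_sign_det_eq (s : SignType) :
    IsPreconnected {g : GL ι ℝ | SignType.sign g.val.det = s} := by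
  rcases Set.eq_empty_or_nonempty {g : GL ι ℝ | SignType.sign g.val.det = s} with h | ⟨g₀, rfl⟩
  · exact h ▸ isPreconnected_empty
  have hcoset : {g : GL ι ℝ | SignType.sign g.val.det = SignType.sign g₀.val.det} =
      (g₀ * ·) '' (GLPos ι ℝ : Set (GL ι ℝ)) := by
    ext g
    have hg : SignType.sign g.val.det =
        SignType.sign g₀.val.det * SignType.sign (g₀⁻¹ * g).val.det := by
      rw [← sign_mul, ← det_mul, ← Units.val_mul, mul_inv_cancel_left]
    have hs : SignType.sign g₀.val.det ≠ 0 := sign_ne_zero.2 (GeneralLinearGroup.det_ne_zero g₀)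
    rw [Set.image_mul_left, Set.mem_preimage, SetLike.mem_coe, mem_glpos, ← sign_eq_one_iff]
    change SignType.sign g.val.det = SignType.sign g₀.val.det ↔
      SignType.sign (g₀⁻¹ * g).val.det = 1
    rw [hg, mul_eq_left₀ hs]
  rw [hcoset]
  exact isPreconnected_GLPos.image _ (continuous_const_mul g₀).continuousOn

end LinearGroups

section Krylov

variable {R : Type*} [CommRing R] {n : ℕ}

/-- The Krylov matrix of a pair `(A, b)`, with columns `b, A b, …, A ^ (n - 1) b`. It is invertible
exactly when `b` is a cyclic vector of `A`. -/
def krylov (A : Matrix (Fin n) (Fin n) R) (b : Fin n → R) : Matrix (Fin n) (Fin n) R :=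
  Matrix.of fun i k => (A ^ (k : ℕ) *ᵥ b) i

theorem krylov_col (A : Matrix (Fin n) (Fin n) R) (b : Fin n → R) (k : Fin n) :
    (krylov A b).col k = A ^ (k : ℕ) *ᵥ b :=
  rfl

theorem vecMul_krylov_apply (A : Matrix (Fin n) (Fin n) R) (b c : Fin n → R) (k : Fin n) :
    (c ᵥ* krylov A b) k = c ⬝ᵥ (A ^ (k : ℕ) *ᵥ b) :=
  rfl

theorem mul_krylov_apply (P A : Matrix (Fin n) (Fin n) R) (b : Fin n → R) (i k : Fin n) :
    (P * krylov A b) i k = (P *ᵥ (A ^ (k : ℕ) *ᵥ b)) i :=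
  rfl

theorem pow_mulVec_eq_krylov_mulVec (A : Matrix (Fin n) (Fin n) R) (b : Fin n → R) (k : ℕ) :
    A ^ k *ᵥ b =
      krylov A b *ᵥ fun j => (Polynomial.X ^ k %ₘ A.charpoly : Polynomial R).coeff j := by
  nontriviality R
  rcases Nat.eq_zero_or_pos n with rfl | hn
  · exact Subsingleton.elim _ _
  set r : Polynomial R := Polynomial.X ^ k %ₘ A.charpoly
  have hdeg : r.natDegree < n := by
    have hχ : A.charpoly.natDegree = n := by simp [charpoly_natDegree_eq_dim]
    have hne : A.charpoly ≠ 1 := fun h => by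
      rw [h, Polynomial.natDegree_one] at hχ
      exact hn.ne hχ
    exact hχ ▸ Polynomial.natDegree_modByMonic_lt _ A.charpoly_monic hne
  rw [pow_eq_aeval_mod_charpoly, Polynomial.aeval_eq_sum_range' hdeg, sum_mulVec, mulVec_eq_sum,
    ← Fin.sum_univ_eq_sum_range (fun j => (r.coeff j • A ^ j) *ᵥ b)]
  exact Finset.sum_congr rfl fun j _ => by rw [smul_mulVec, op_smul_eq_smul]; rfl

theorem span_pow_mulVec_eq_range_krylov (A : Matrix (Fin n) (Fin n) R) (b : Fin n → R) :
    Submodule.span R {u | ∃ k : ℕ, u = A ^ k *ᵥ b} = LinearMap.range (krylov A b).mulVecLin := by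
  apply le_antisymm
  · rw [Submodule.span_le]
    rintro _ ⟨k, rfl⟩
    exact ⟨_, (pow_mulVec_eq_krylov_mulVec A b k).symm⟩
  · rw [range_mulVecLin]
    refine Submodule.span_mono ?_
    rintro _ ⟨j, rfl⟩
    exact ⟨j, krylov_col A b j⟩

theorem span_pow_mulVec_eq_top_iff (A : Matrix (Fin n) (Fin n) R) (b : Fin n → R) :
    Submodule.span R {u | ∃ k : ℕ, u = A ^ k *ᵥ b} = ⊤ ↔ IsUnit (krylov A b) := by
  rw [span_pow_mulVec_eq_range_krylov, LinearMap.range_eq_top, coe_mulVecLin,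
    mulVec_surjective_iff_isUnit]

theorem span_vecMul_pow_eq_top_iff (A : Matrix (Fin n) (Fin n) R) (c : Fin n → R) :
    Submodule.span R {u | ∃ k : ℕ, u = c ᵥ* A ^ k} = ⊤ ↔ IsUnit (krylov Aᵀ c) := by
  simp only [← span_pow_mulVec_eq_top_iff, ← transpose_pow, mulVec_transpose]

theorem krylov_smul_smul (a s : R) (A : Matrix (Fin n) (Fin n) R) (b : Fin n → R) :
    krylov (a • A) (s • b) = krylov A b * diagonal fun k : Fin n => a ^ (k : ℕ) * s := by
  ext i k
  simp only [mul_diagonal, krylov, of_apply, smul_pow, smul_mulVec, mulVec_smul,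
    Pi.smul_apply, smul_eq_mul]
  ring

theorem isUnit_krylov_smul_smul_iff {a s : R} (ha : IsUnit a) (hs : IsUnit s)
    (A : Matrix (Fin n) (Fin n) R) (b : Fin n → R) :
    IsUnit (krylov (a • A) (s • b)) ↔ IsUnit (krylov A b) := by
  have hdiag : IsUnit (diagonal fun k : Fin n => a ^ (k : ℕ) * s) :=
    isUnit_diagonal.2 (Pi.isUnit_iff.2 fun k => (ha.pow k).mul hs)
  rw [krylov_smul_smul, IsUnit.mul_iff, and_iff_left hdiag]

theorem krylov_map {S : Type*} [CommRing S] (f : R →+* S) (A : Matrix (Fin n) (Fin n) R)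
    (b : Fin n → R) : krylov (A.map f) (f ∘ b) = (krylov A b).map f := by
  ext i k
  rw [map_apply, krylov, of_apply, krylov, of_apply, RingHom.map_mulVec, Matrix.map_pow]

theorem isUnit_krylov_map_iff {S : Type*} [CommRing S] (f : R →+* S) [IsLocalHom f]
    (A : Matrix (Fin n) (Fin n) R) (b : Fin n → R) :
    IsUnit (krylov (A.map f) (f ∘ b)) ↔ IsUnit (krylov A b) := by
  rw [krylov_map, isUnit_iff_isUnit_det, isUnit_iff_isUnit_det, ← RingHom.mapMatrix_apply,
    ← RingHom.map_det, isUnit_map_iff]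

theorem krylov_mulVec_of_semiconjBy {P A B : Matrix (Fin n) (Fin n) R} (h : SemiconjBy P A B)
    (b : Fin n → R) : krylov B (P *ᵥ b) = P * krylov A b := by
  ext i k
  rw [mul_krylov_apply, mulVec_mulVec, (h.pow_right k).eq, ← mulVec_mulVec, krylov, of_apply]

theorem isUnit_krylov_mulVec_iff_of_semiconjBy {P A B : Matrix (Fin n) (Fin n) R}
    (h : SemiconjBy P A B) (b : Fin n → R) :
    IsUnit (krylov B (P *ᵥ b)) ↔ IsUnit P ∧ IsUnit (krylov A b) := by
  rw [krylov_mulVec_of_semiconjBy h, IsUnit.mul_iff]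

theorem krylov_diagonal (lam mu : Fin n → R) :
    krylov (diagonal lam) mu = diagonal mu * vandermonde lam := by
  ext i k
  rw [diagonal_mul, vandermonde_apply, krylov, of_apply, diagonal_pow, mulVec_diagonal,
    Pi.pow_apply, mul_comm]

theorem injective_of_isUnit_krylov_diagonal {K : Type*} [Field K] {lam mu : Fin n → K}
    (h : IsUnit (krylov (diagonal lam) mu)) : Function.Injective lam := by
  rw [krylov_diagonal, IsUnit.mul_iff, isUnit_iff_isUnit_det (vandermonde lam)] at h
  exact det_vandermonde_ne_zero_iff.1 h.2.ne_zero

theorem ne_zero_of_isUnit_krylov_diagonal {K : Type*} [Field K] {lam mu : Fin n → K}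
    (h : IsUnit (krylov (diagonal lam) mu)) (i : Fin n) : mu i ≠ 0 := by
  rw [krylov_diagonal, IsUnit.mul_iff, isUnit_diagonal, Pi.isUnit_iff] at h
  exact (h.1 i).ne_zero

theorem det_krylov_diagonal_pos {lam mu : Fin n → ℝ} (hlam : StrictMono lam)
    (hmu : ∀ i, 0 < mu i) : 0 < (krylov (diagonal lam) mu).det := by
  rw [krylov_diagonal, det_mul, det_diagonal, det_vandermonde]
  exact mul_pos (Finset.prod_pos fun i _ => hmu i) (Finset.prod_pos fun i _ =>
    Finset.prod_pos fun j hj => sub_pos.2 (hlam (Finset.mem_Ioi.1 hj)))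

end Krylov

section CyclicPair

variable {R : Type*} [CommRing R] {n : ℕ} {A D : Matrix (Fin n) (Fin n) R} {b c m p : Fin n → R}

theorem mulVec_pow_mulVec_of_mul_krylov_eq {P : Matrix (Fin n) (Fin n) R}
    (hχ : A.charpoly = D.charpoly) (hP : P * krylov D m = krylov A b) (k : ℕ) :
    P *ᵥ (D ^ k *ᵥ m) = A ^ k *ᵥ b := by
  rw [pow_mulVec_eq_krylov_mulVec, mulVec_mulVec, hP, ← hχ, ← pow_mulVec_eq_krylov_mulVec]

theorem semiconjBy_of_mul_krylov_eq {P : Matrix (Fin n) (Fin n) R} (hD : IsUnit (krylov D m))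
    (hχ : A.charpoly = D.charpoly) (hP : P * krylov D m = krylov A b) : SemiconjBy P D A := by
  have hkrylov : P * D * krylov D m = A * P * krylov D m := by
    ext i k
    rw [mul_assoc A, hP, mul_krylov_apply, mul_krylov_apply, ← mulVec_mulVec, mulVec_mulVec _ D,
      mulVec_mulVec _ A, ← pow_succ', ← pow_succ', mulVec_pow_mulVec_of_mul_krylov_eq hχ hP]
  exact hD.mul_right_cancel hkrylov

theorem exists_GL_semiconjBy_of_charpoly_eq (hA : IsUnit (krylov A b)) (hD : IsUnit (krylov D m))
    (hχ : A.charpoly = D.charpoly)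
    (hmoment : ∀ k : Fin n, c ⬝ᵥ (A ^ (k : ℕ) *ᵥ b) = p ⬝ᵥ (D ^ (k : ℕ) *ᵥ m)) :
    ∃ g : GL (Fin n) R, SemiconjBy g.val D A ∧ g.val *ᵥ m = b ∧ c ᵥ* g.val = p := by
  let g : GL (Fin n) R := hA.unit * hD.unit⁻¹
  have hg : g.val * krylov D m = krylov A b :=
    congrArg Units.val (inv_mul_cancel_right hA.unit hD.unit)
  refine ⟨g, semiconjBy_of_mul_krylov_eq hD hχ hg, ?_, vecMul_injective_of_isUnit hD ?_⟩
  · simpa using mulVec_pow_mulVec_of_mul_krylov_eq hχ hg 0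
  · ext k
    beta_reduce
    rw [vecMul_vecMul, hg, vecMul_krylov_apply, vecMul_krylov_apply, hmoment]

end CyclicPair

section Scaling

theorem smul_dotProduct_smul_pow_mulVec_smul {R ι : Type*} [CommRing R] [Fintype ι]
    [DecidableEq ι] (a : R) (M : Matrix ι ι R) (v w : ι → R) (k : ℕ) :
    (a • w) ⬝ᵥ ((a • M) ^ k *ᵥ (a • v)) = a ^ (k + 2) * (w ⬝ᵥ (M ^ k *ᵥ v)) := by
  simp only [smul_pow, smul_mulVec, mulVec_smul, smul_dotProduct, dotProduct_smul, smul_eq_mul]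
  ring

theorem charpoly_smul_comp {R ι : Type*} [CommRing R] [Fintype ι] [DecidableEq ι] (a : R)
    (M : Matrix ι ι R) :
    (a • M).charpoly.comp (Polynomial.C a * Polynomial.X) =
      Polynomial.C a ^ Fintype.card ι * M.charpoly := by
  have hmatrix : (charmatrix (a • M)).map
      (Polynomial.compRingHom (Polynomial.C a * Polynomial.X)) = Polynomial.C a • charmatrix M := by
    ext1 i j
    by_cases hij : i = j <;> simp [hij, mul_sub]
  have hdet := RingHom.map_det (Polynomial.compRingHom (Polynomial.C a * Polynomial.X))
    (charmatrix (a • M))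
  rwa [RingHom.mapMatrix_apply, hmatrix, det_smul] at hdet

theorem charpoly_smul_eq_charpoly_smul_iff {K ι : Type*} [Field K] [Fintype ι] [DecidableEq ι]
    {a : K} (ha : a ≠ 0) {M N : Matrix ι ι K} :
    (a • M).charpoly = (a • N).charpoly ↔ M.charpoly = N.charpoly := by
  have hcongr {s : K} (hs : s ≠ 0) {M N : Matrix ι ι K}
      (h : (s • M).charpoly = (s • N).charpoly) : M.charpoly = N.charpoly := by
    have hC : Polynomial.C s ^ Fintype.card ι ≠ 0 := pow_ne_zero _ (Polynomial.C_ne_zero.2 hs)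
    refine mul_left_cancel₀ hC ?_
    rw [← charpoly_smul_comp, h, charpoly_smul_comp]
  refine ⟨hcongr ha, fun h => hcongr (inv_ne_zero ha) ?_⟩
  rwa [inv_smul_smul₀ ha, inv_smul_smul₀ ha]

end Scaling

section Hermitian

variable {𝕜 ι : Type*} [RCLike 𝕜] [Fintype ι] [DecidableEq ι] {X : Matrix ι ι 𝕜}

theorem semiconjBy_eigenvectorUnitary (hX : X.IsHermitian) :
    SemiconjBy (hX.eigenvectorUnitary : Matrix ι ι 𝕜)
      (diagonal (RCLike.ofReal ∘ hX.eigenvalues)) X := by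
  rw [SemiconjBy]
  conv_rhs => enter [1]; rw [hX.spectral_theorem]
  rw [Unitary.conjStarAlgAut_apply, mul_assoc _ (star _), Unitary.coe_star_mul_self, mul_one]

theorem star_dotProduct_pow_mulVec_eq_sum_eigenvalues (hX : X.IsHermitian) (z : ι → 𝕜) (k : ℕ) :
    star (hX.eigenvectorUnitary.val *ᵥ z) ⬝ᵥ (X ^ k *ᵥ (hX.eigenvectorUnitary.val *ᵥ z)) =
      (∑ i, hX.eigenvalues i ^ k * ‖z i‖ ^ 2 : ℝ) := by
  rw [mulVec_mulVec, ← ((semiconjBy_eigenvectorUnitary hX).pow_right k).eq, ← mulVec_mulVec,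
    star_mulVec, ← dotProduct_mulVec, mulVec_mulVec, ← star_eq_conjTranspose,
    Unitary.coe_star_mul_self, one_mulVec, diagonal_pow]
  simp only [dotProduct, mulVec_diagonal, RCLike.ofReal_sum]
  refine Finset.sum_congr rfl fun i _ => ?_
  simp only [Pi.star_apply, Pi.pow_apply, Function.comp_apply, RCLike.star_def, RCLike.ofReal_mul,
    RCLike.ofReal_pow, ← RCLike.conj_mul]
  ring

theorem exists_strictMono_pos_of_isUnit_krylov {n : ℕ} {X : Matrix (Fin n) (Fin n) 𝕜}
    (hX : X.IsHermitian) {u : Fin n → 𝕜}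
    (hu : IsUnit (krylov X u)) :
    ∃ lam mu : Fin n → ℝ, StrictMono lam ∧ (∀ i, 0 < mu i) ∧
      X.charpoly = (diagonal lam).charpoly.map (algebraMap ℝ 𝕜) ∧
      ∀ k : ℕ, star u ⬝ᵥ (X ^ k *ᵥ u) = (mu ⬝ᵥ (diagonal lam ^ k *ᵥ mu) : ℝ) := by
  let U := hX.eigenvectorUnitary.val
  obtain ⟨z, rfl⟩ : ∃ z, U *ᵥ z = u := ⟨star U *ᵥ u, by
    rw [mulVec_mulVec, Unitary.mul_star_self_of_mem hX.eigenvectorUnitary.2, one_mulVec]⟩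
  have hz : IsUnit (krylov (diagonal (RCLike.ofReal ∘ hX.eigenvalues)) z) :=
    ((isUnit_krylov_mulVec_iff_of_semiconjBy (semiconjBy_eigenvectorUnitary hX) z).1 hu).2
  have hinj : Function.Injective hX.eigenvalues :=
    (injective_of_isUnit_krylov_diagonal hz).of_comp
  let σ := Tuple.sort hX.eigenvalues
  refine ⟨hX.eigenvalues ∘ σ, fun i => ‖z (σ i)‖,
    (Tuple.monotone_sort _).strictMono_of_injective (hinj.comp σ.injective),
    fun i => norm_pos_iff.2 (ne_zero_of_isUnit_krylov_diagonal hz _), ?_, fun k => ?_⟩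
  · rw [hX.charpoly_eq, charpoly_diagonal, Polynomial.map_prod, ← Equiv.prod_comp σ]
    simp
  · rw [star_dotProduct_pow_mulVec_eq_sum_eigenvalues, ← Equiv.sum_comp σ, diagonal_pow, dotProduct]
    simp only [mulVec_diagonal, Pi.pow_apply, Function.comp_apply]
    congr! 2
    ring

end Hermitian

section Bordered

variable {α : Type*} {n : ℕ}

/-- The matrix with upper-left block `A`, last column `(b, d)` and last row `(c, d)`. -/
def bordered (A : Matrix (Fin n) (Fin n) α) (b c : Fin n → α) (d : α) :
    Matrix (Fin (n + 1)) (Fin (n + 1)) α :=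
  reindex finSumFinEquiv finSumFinEquiv
    (fromBlocks A (replicateCol (Fin 1) b) (replicateRow (Fin 1) c) (of fun _ _ => d))

section Entries

variable (A : Matrix (Fin n) (Fin n) α) (b c : Fin n → α) (d : α)

theorem bordered_castSucc_castSucc (i j : Fin n) :
    bordered A b c d i.castSucc j.castSucc = A i j := by
  change fromBlocks _ _ _ _ (finSumFinEquiv.symm (i.castAdd 1))
    (finSumFinEquiv.symm (j.castAdd 1)) = _
  rw [finSumFinEquiv_symm_apply_castAdd, finSumFinEquiv_symm_apply_castAdd, fromBlocks_apply₁₁]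

theorem bordered_castSucc_last (i : Fin n) :
    bordered A b c d i.castSucc (Fin.last n) = b i := by
  change fromBlocks _ _ _ _ (finSumFinEquiv.symm (i.castAdd 1))
    (finSumFinEquiv.symm (Fin.natAdd n 0)) = _
  rw [finSumFinEquiv_symm_apply_castAdd, finSumFinEquiv_symm_apply_natAdd, fromBlocks_apply₁₂]
  rfl

theorem bordered_last_castSucc (j : Fin n) :
    bordered A b c d (Fin.last n) j.castSucc = c j := by
  change fromBlocks _ _ _ _ (finSumFinEquiv.symm (Fin.natAdd n 0))
    (finSumFinEquiv.symm (j.castAdd 1)) = _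
  rw [finSumFinEquiv_symm_apply_castAdd, finSumFinEquiv_symm_apply_natAdd, fromBlocks_apply₂₁]
  rfl

theorem bordered_last_last : bordered A b c d (Fin.last n) (Fin.last n) = d := by
  change fromBlocks _ _ _ _ (finSumFinEquiv.symm (Fin.natAdd n 0))
    (finSumFinEquiv.symm (Fin.natAdd n 0)) = _
  rw [finSumFinEquiv_symm_apply_natAdd, fromBlocks_apply₂₂]
  rfl

theorem exists_bordered_eq (M : Matrix (Fin (n + 1)) (Fin (n + 1)) α) :
    ∃ A b c d, bordered A b c d = M := by
  refine ⟨of fun i j => M i.castSucc j.castSucc, fun i => M i.castSucc (Fin.last n),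
    fun j => M (Fin.last n) j.castSucc, M (Fin.last n) (Fin.last n), ?_⟩
  ext i j
  induction i using Fin.lastCases <;> induction j using Fin.lastCases
  · rw [bordered_last_last]
  · rw [bordered_last_castSucc]
  · rw [bordered_castSucc_last]
  · rw [bordered_castSucc_castSucc, of_apply]

end Entries

variable (A : Matrix (Fin n) (Fin n) ℝ) (b c : Fin n → ℝ) (d : ℝ)

theorem dgR_mul_bordered_mul_dgR (P Q : Matrix (Fin n) (Fin n) ℝ) :
    dgR P * bordered A b c d * dgR Q = bordered (P * A * Q) (P *ᵥ b) (c ᵥ* Q) d := by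
  simp only [dgR, bordered, reindex_apply, submatrix_mul_equiv, fromBlocks_multiply,
    Matrix.zero_mul, Matrix.mul_zero, Matrix.one_mul, Matrix.mul_one, add_zero, zero_add,
    replicateCol_mulVec, replicateRow_vecMul]

theorem mact_iM (g : GL (Fin n) ℝ) (M : Matrix (Fin (n + 1)) (Fin (n + 1)) ℝ) :
    mact g (iM M) = iM (dgR g.val * M * dgR g⁻¹.val) := by
  have hdg (B : Matrix (Fin n) (Fin n) ℝ) :
      dgC (B.map Complex.ofRealHom) = (dgR B).map Complex.ofRealHom := by
    rw [dgC, dgR, reindex_apply, reindex_apply, ← submatrix_map, fromBlocks_map,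
      Matrix.map_zero _ (map_zero _), Matrix.map_zero _ (map_zero _),
      Matrix.map_one _ (map_zero _) (map_one _)]
  change dgC (g.val.map Complex.ofRealHom) * Complex.I • M.map Complex.ofRealHom *
    dgC (g⁻¹.val.map Complex.ofRealHom) =
    Complex.I • (dgR g.val * M * dgR g⁻¹.val).map Complex.ofRealHom
  rw [hdg, hdg, Matrix.map_mul, Matrix.map_mul, Matrix.mul_smul, Matrix.smul_mul]

theorem mact_iM_bordered (g : GL (Fin n) ℝ) : mact g (iM (bordered A b c d)) =
    iM (bordered (g.val * A * g⁻¹.val) (g.val *ᵥ b) (c ᵥ* g⁻¹.val) d) := by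
  rw [mact_iM, dgR_mul_bordered_mul_dgR]

theorem iArrow_eq_iM_bordered (lam mu : Fin n → ℝ) :
    iArrow lam mu d = iM (bordered (diagonal lam) mu mu d) :=
  rfl

theorem iM_mem_sSet (M : Matrix (Fin (n + 1)) (Fin (n + 1)) ℝ) : iM M ∈ sSet n := by
  change _ + _ = _
  ext i j
  simp [iM]

theorem exists_iM_bordered_eq_of_mem_sSet {y : Matrix (Fin (n + 1)) (Fin (n + 1)) ℂ}
    (hy : y ∈ sSet n) : ∃ A b c d, iM (bordered A b c d) = y := by
  obtain ⟨A, b, c, d, hM⟩ := exists_bordered_eq (y.map Complex.im)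
  refine ⟨A, b, c, d, ?_⟩
  ext i j
  have hre : (y i j).re = 0 := by
    have hij := congrArg Complex.re (congrFun (congrFun hy i) j)
    simpa [← two_mul] using hij
  rw [hM]
  apply Complex.ext <;> simp [iM, hre]

theorem blk0_iM_bordered :
    blk0 (iM (bordered A b c d)) = Complex.I • A.map Complex.ofRealHom := by
  ext i j
  simp [blk0, iM, bordered_castSucc_castSucc]

theorem blkv_iM_bordered :
    blkv (iM (bordered A b c d)) = Complex.I • (Complex.ofRealHom ∘ b) := by
  ext i
  simp [blkv, iM, bordered_castSucc_last]

theorem blkw_iM_bordered :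
    blkw (iM (bordered A b c d)) = Complex.I • (Complex.ofRealHom ∘ c) := by
  ext j
  simp [blkw, iM, bordered_last_castSucc]

theorem blkd_iM_bordered : blkd (iM (bordered A b c d)) = Complex.I * d := by
  simp [blkd, iM, bordered_last_last]

end Bordered

section Invariants

variable {n : ℕ} {A : Matrix (Fin n) (Fin n) ℝ} {b c : Fin n → ℝ} {d : ℝ}

theorem RSspan_iM_bordered_iff :
    RSspan (iM (bordered A b c d)) ↔ IsUnit (krylov A b) ∧ IsUnit (krylov Aᵀ c) := by
  have hI : IsUnit Complex.I := Complex.I_ne_zero.isUnit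
  rw [RSspan, span_pow_mulVec_eq_top_iff, span_vecMul_pow_eq_top_iff, blk0_iM_bordered,
    blkv_iM_bordered, blkw_iM_bordered, transpose_smul, ← transpose_map,
    isUnit_krylov_smul_smul_iff hI hI, isUnit_krylov_smul_smul_iff hI hI, isUnit_krylov_map_iff,
    isUnit_krylov_map_iff]

theorem InvS_iM_bordered : InvS (iM (bordered A b c d)) =
    ((Complex.I • A.map Complex.ofRealHom).charpoly,
      fun k : Fin n => Complex.I ^ ((k : ℕ) + 2) * Complex.ofRealHom (c ⬝ᵥ (A ^ (k : ℕ) *ᵥ b)),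
      Complex.I * d) := by
  simp only [InvS, blk0_iM_bordered, blkv_iM_bordered, blkw_iM_bordered, blkd_iM_bordered,
    smul_dotProduct_smul_pow_mulVec_smul, RingHom.map_dotProduct, ← Matrix.map_pow]
  congr! 6
  ext i
  exact (RingHom.map_mulVec _ _ _ _).symm

theorem InvS_iM_bordered_eq_iff {A' : Matrix (Fin n) (Fin n) ℝ} {b' c' : Fin n → ℝ} {d' : ℝ} :
    InvS (iM (bordered A b c d)) = InvS (iM (bordered A' b' c' d')) ↔
      A.charpoly = A'.charpoly ∧
        (∀ k : Fin n, c ⬝ᵥ (A ^ (k : ℕ) *ᵥ b) = c' ⬝ᵥ (A' ^ (k : ℕ) *ᵥ b')) ∧ d = d' := by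
  have hI (k : ℕ) : Complex.I ^ k ≠ 0 := pow_ne_zero k Complex.I_ne_zero
  rw [InvS_iM_bordered, InvS_iM_bordered, Prod.mk.injEq, Prod.mk.injEq,
    charpoly_smul_eq_charpoly_smul_iff Complex.I_ne_zero, charpoly_map, charpoly_map,
    (Polynomial.map_injective _ Complex.ofRealHom.injective).eq_iff, funext_iff,
    mul_right_inj' Complex.I_ne_zero, Complex.ofReal_inj]
  simp only [mul_right_inj' (hI _), Complex.ofRealHom.injective.eq_iff]

theorem InvS_mact {y : Matrix (Fin (n + 1)) (Fin (n + 1)) ℂ} (hy : y ∈ sSet n)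
    (g : GL (Fin n) ℝ) : InvS (mact g y) = InvS y := by
  obtain ⟨A, b, c, d, rfl⟩ := exists_iM_bordered_eq_of_mem_sSet hy
  rw [mact_iM_bordered, InvS_iM_bordered_eq_iff]
  refine ⟨coe_units_inv g ▸ charpoly_units_conj g A, fun k => ?_, rfl⟩
  rw [Units.conj_pow, mulVec_mulVec, Units.inv_mul_cancel_right, ← mulVec_mulVec,
    dotProduct_mulVec, vecMul_vecMul, Units.inv_mul, vecMul_one]

theorem RSspan_mact {y : Matrix (Fin (n + 1)) (Fin (n + 1)) ℂ} (hy : y ∈ sSet n)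
    (hspan : RSspan y) (g : GL (Fin n) ℝ) : RSspan (mact g y) := by
  obtain ⟨A, b, c, d, rfl⟩ := exists_iM_bordered_eq_of_mem_sSet hy
  rw [RSspan_iM_bordered_iff] at hspan
  rw [mact_iM_bordered, RSspan_iM_bordered_iff]
  have hrow : SemiconjBy g⁻¹.valᵀ Aᵀ (g.val * A * g⁻¹.val)ᵀ := by
    rw [SemiconjBy, ← transpose_mul, ← transpose_mul, mul_assoc, Units.inv_mul_cancel_left]
  rw [← mulVec_transpose, isUnit_krylov_mulVec_iff_of_semiconjBy (Units.mk_semiconjBy g A),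
    isUnit_krylov_mulVec_iff_of_semiconjBy hrow, isUnit_transpose]
  exact ⟨⟨g.isUnit, hspan.1⟩, g⁻¹.isUnit, hspan.2⟩

theorem exists_mact_eq_of_InvS_eq {y z : Matrix (Fin (n + 1)) (Fin (n + 1)) ℂ}
    (hy : y ∈ sSet n) (hz : z ∈ sSet n) (hyspan : RSspan y) (hzspan : RSspan z)
    (h : InvS y = InvS z) : ∃ g : GL (Fin n) ℝ, mact g z = y := by
  obtain ⟨A, b, c, d, rfl⟩ := exists_iM_bordered_eq_of_mem_sSet hy
  obtain ⟨D, m, p, e, rfl⟩ := exists_iM_bordered_eq_of_mem_sSet hz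
  obtain ⟨hχ, hmoment, rfl⟩ := InvS_iM_bordered_eq_iff.1 h
  obtain ⟨g, hg, rfl, rfl⟩ := exists_GL_semiconjBy_of_charpoly_eq
    (RSspan_iM_bordered_iff.1 hyspan).1 (RSspan_iM_bordered_iff.1 hzspan).1 hχ hmoment
  refine ⟨g, ?_⟩
  rw [mact_iM_bordered, hg.eq, Units.mul_inv_cancel_right, vecMul_vecMul, Units.mul_inv, vecMul_one]

end Invariants

section UnitarySide

variable {n : ℕ} {lam mu : Fin n → ℝ} {d : ℝ}

theorem exists_hermitian_blk0_eq_of_mem_uSet {x : Matrix (Fin (n + 1)) (Fin (n + 1)) ℂ}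
    (hx : x ∈ uSet n) : ∃ X : Matrix (Fin n) (Fin n) ℂ, X.IsHermitian ∧ blk0 x = Complex.I • X := by
  have hentry (i j) : star (x j i) = -x i j := congrFun (congrFun hx i) j
  refine ⟨-Complex.I • blk0 x, ?_, ?_⟩
  · ext i j
    simp [blk0, hentry]
  · rw [smul_smul, mul_neg, Complex.I_mul_I, neg_neg, one_smul]

theorem exists_blkd_eq_of_mem_uSet {x : Matrix (Fin (n + 1)) (Fin (n + 1)) ℂ} (hx : x ∈ uSet n) :
    ∃ d : ℝ, blkd x = Complex.I * d := by
  have hre : (blkd x).re = 0 := by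
    have hlast := congrArg Complex.re (congrFun (congrFun hx (Fin.last n)) (Fin.last n))
    exact self_eq_neg.1 hlast
  exact ⟨(blkd x).im, by apply Complex.ext <;> simp [hre]⟩

theorem exists_InvS_iArrow_eq_InvU {x : Matrix (Fin (n + 1)) (Fin (n + 1)) ℂ} (hx : x ∈ uSet n)
    (hspan : RSspanU x) :
    ∃ (lam mu : Fin n → ℝ) (d : ℝ), StrictMono lam ∧ (∀ i, 0 < mu i) ∧
      InvS (iArrow lam mu d) = InvU x := by
  obtain ⟨X, hX, hblk⟩ := exists_hermitian_blk0_eq_of_mem_uSet hx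
  obtain ⟨d, hd⟩ := exists_blkd_eq_of_mem_uSet hx
  have hcyclic : IsUnit (krylov X (blkv x)) := by
    rwa [RSspanU, span_pow_mulVec_eq_top_iff, hblk, ← one_smul ℂ (blkv x),
      isUnit_krylov_smul_smul_iff Complex.I_ne_zero.isUnit isUnit_one] at hspan
  obtain ⟨lam, mu, hlam, hmu, hχ, hmoment⟩ := exists_strictMono_pos_of_isUnit_krylov hX hcyclic
  refine ⟨lam, mu, d, hlam, hmu, ?_⟩
  rw [iArrow_eq_iM_bordered, InvS_iM_bordered, InvU, hd, hblk]
  refine Prod.ext ?_ (Prod.ext (funext fun k => ?_) rfl)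
  · exact (charpoly_smul_eq_charpoly_smul_iff Complex.I_ne_zero).2
      ((charpoly_map _ _).trans hχ.symm)
  · change Complex.I ^ ((k : ℕ) + 2) * ((mu ⬝ᵥ (diagonal lam ^ (k : ℕ) *ᵥ mu) : ℝ) : ℂ) =
      -(star (blkv x) ⬝ᵥ ((Complex.I • X) ^ (k : ℕ) *ᵥ blkv x))
    rw [smul_pow, smul_mulVec, dotProduct_smul, hmoment k, pow_add, Complex.I_sq, smul_eq_mul]
    simp

theorem iArrow_mem_uSet : iArrow lam mu d ∈ uSet n := by
  have harrow : (arrow lam mu d)ᵀ = arrow lam mu d := by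
    rw [arrow, transpose_reindex, fromBlocks_transpose, diagonal_transpose]
    rfl
  ext i j
  simpa [iM, iArrow] using congrFun (congrFun harrow i) j

theorem InvS_iArrow_eq_InvU_iArrow : InvS (iArrow lam mu d) = InvU (iArrow lam mu d) := by
  have hstar : star (blkv (iArrow lam mu d)) = -blkw (iArrow lam mu d) := by
    rw [iArrow_eq_iM_bordered, blkv_iM_bordered, blkw_iM_bordered]
    ext i
    simp
  rw [InvS, InvU, hstar]
  simp only [neg_dotProduct, neg_neg]

end UnitarySide

section Orbits

variable {n : ℕ} {lam mu : Fin n → ℝ} {d : ℝ}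

theorem iArrow_mem_frakS (hlam : StrictMono lam) (hmu : ∀ i, 0 < mu i) :
    iArrow lam mu d ∈ frakS n := by
  have hunit : IsUnit (krylov (diagonal lam) mu) :=
    (isUnit_iff_isUnit_det _).2 (det_krylov_diagonal_pos hlam hmu).ne'.isUnit
  have hspan : RSspan (iArrow lam mu d) :=
    RSspan_iM_bordered_iff.2 ⟨hunit, (diagonal_transpose lam).symm ▸ hunit⟩
  exact ⟨iM_mem_sSet _, hspan, _, iArrow_mem_uSet, hspan.1, InvS_iArrow_eq_InvU_iArrow⟩

theorem mact_mem_frakS {y : Matrix (Fin (n + 1)) (Fin (n + 1)) ℂ} (hy : y ∈ frakS n)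
    (g : GL (Fin n) ℝ) : mact g y ∈ frakS n := by
  obtain ⟨hs, hspan, x, hx, hxspan, hinv⟩ := hy
  refine ⟨?_, RSspan_mact hs hspan g, x, hx, hxspan, (InvS_mact hs g).trans hinv⟩
  obtain ⟨A, b, c, d, rfl⟩ := exists_iM_bordered_eq_of_mem_sSet hs
  exact mact_iM_bordered A b c d g ▸ iM_mem_sSet _

theorem exists_mact_iArrow_eq_of_mem_frakS {y : Matrix (Fin (n + 1)) (Fin (n + 1)) ℂ}
    (hy : y ∈ frakS n) :
    ∃ (g : GL (Fin n) ℝ) (lam mu : Fin n → ℝ) (d : ℝ), StrictMono lam ∧ (∀ i, 0 < mu i) ∧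
      mact g (iArrow lam mu d) = y := by
  obtain ⟨hs, hspan, x, hx, hxspan, hinv⟩ := hy
  obtain ⟨lam, mu, d, hlam, hmu, harrow⟩ := exists_InvS_iArrow_eq_InvU hx hxspan
  have hmem : iArrow lam mu d ∈ frakS n := iArrow_mem_frakS hlam hmu
  obtain ⟨g, hg⟩ := exists_mact_eq_of_InvS_eq hs hmem.1 hspan hmem.2.1 (hinv.trans harrow.symm)
  exact ⟨g, lam, mu, d, hlam, hmu, hg⟩

end Orbits

section Components

variable {n : ℕ}

/-- The determinant of the Krylov matrix of the pair `(Im y₀, Im v)`. For `y ∈ sSet n`, where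
`y₀` and `v` are purely imaginary, this is `det (v, y₀ v, …, y₀ ^ (n - 1) v)` up to a power of
`i`. -/
def krylovDet (y : Matrix (Fin (n + 1)) (Fin (n + 1)) ℂ) : ℝ :=
  (krylov ((blk0 y).map Complex.im) (Complex.im ∘ blkv y)).det

theorem krylovDet_iM_bordered (A : Matrix (Fin n) (Fin n) ℝ) (b c : Fin n → ℝ) (d : ℝ) :
    krylovDet (iM (bordered A b c d)) = (krylov A b).det := by
  rw [krylovDet, blk0_iM_bordered, blkv_iM_bordered]
  congr 2 <;> ext <;> simp

theorem continuous_krylovDet : Continuous (krylovDet (n := n)) := by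
  unfold krylovDet krylov blk0 blkv
  fun_prop

theorem krylovDet_mact {y : Matrix (Fin (n + 1)) (Fin (n + 1)) ℂ} (hy : y ∈ sSet n)
    (g : GL (Fin n) ℝ) : krylovDet (mact g y) = g.val.det * krylovDet y := by
  obtain ⟨A, b, c, d, rfl⟩ := exists_iM_bordered_eq_of_mem_sSet hy
  rw [mact_iM_bordered, krylovDet_iM_bordered, krylovDet_iM_bordered,
    krylov_mulVec_of_semiconjBy (Units.mk_semiconjBy g A), det_mul]

theorem krylovDet_ne_zero {y : Matrix (Fin (n + 1)) (Fin (n + 1)) ℂ} (hy : y ∈ frakS n) :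
    krylovDet y ≠ 0 := by
  obtain ⟨hs, hspan, -⟩ := hy
  obtain ⟨A, b, c, d, rfl⟩ := exists_iM_bordered_eq_of_mem_sSet hs
  rw [krylovDet_iM_bordered]
  exact ((isUnit_iff_isUnit_det _).1 (RSspan_iM_bordered_iff.1 hspan).1).ne_zero

theorem krylovDet_iArrow_pos {lam mu : Fin n → ℝ} {d : ℝ} (hlam : StrictMono lam)
    (hmu : ∀ i, 0 < mu i) : 0 < krylovDet (iArrow lam mu d) := by
  rw [iArrow_eq_iM_bordered, krylovDet_iM_bordered]
  exact det_krylov_diagonal_pos hlam hmu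

theorem sign_krylovDet_mact_iArrow {lam mu : Fin n → ℝ} {d : ℝ} (hlam : StrictMono lam)
    (hmu : ∀ i, 0 < mu i) (g : GL (Fin n) ℝ) :
    SignType.sign (krylovDet (mact g (iArrow lam mu d))) = SignType.sign g.val.det := by
  rw [krylovDet_mact (iArrow_mem_frakS hlam hmu).1, sign_mul,
    sign_pos (krylovDet_iArrow_pos hlam hmu), mul_one]

theorem exists_mem_frakS_krylovDet_pos : ∃ y ∈ frakS n, 0 < krylovDet y := by
  have hlam : StrictMono fun i : Fin n => (i : ℝ) := fun _ _ h => Nat.cast_lt.2 h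
  have hmu (_ : Fin n) : (0 : ℝ) < 1 := one_pos
  exact ⟨iArrow _ _ 0, iArrow_mem_frakS hlam hmu, krylovDet_iArrow_pos hlam hmu⟩

theorem continuous_mact_iArrow : Continuous fun p : GL (Fin n) ℝ × (Fin n → ℝ) × (Fin n → ℝ) × ℝ =>
    mact p.1 (iArrow p.2.1 p.2.2.1 p.2.2.2) := by
  unfold mact dgC iArrow iM arrow
  fun_prop

theorem isPreconnected_setOf_sign_krylovDet_eq (s : SignType) :
    IsPreconnected {y ∈ frakS n | SignType.sign (krylovDet y) = s} := by
  let cell : Set ((Fin n → ℝ) × (Fin n → ℝ) × ℝ) :=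
    {lam | StrictMono lam} ×ˢ (Set.univ.pi fun _ => Set.Ioi 0) ×ˢ Set.univ
  have hcell : IsPreconnected cell := Convex.isPreconnected <|
    convex_setOf_strictMono.prod ((convex_pi fun _ _ => convex_Ioi 0).prod convex_univ)
  convert ((isPreconnected_setOf_sign_det_eq s).prod hcell).image _
    continuous_mact_iArrow.continuousOn
  ext y
  constructor
  · rintro ⟨hy, rfl⟩
    obtain ⟨g, lam, mu, d, hlam, hmu, rfl⟩ := exists_mact_iArrow_eq_of_mem_frakS hy
    exact ⟨(g, lam, mu, d), ⟨(sign_krylovDet_mact_iArrow hlam hmu g).symm,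
      hlam, fun i _ => hmu i, trivial⟩, rfl⟩
  · rintro ⟨⟨g, lam, mu, d⟩, ⟨rfl, hlam, hmu, -⟩, rfl⟩
    have hmu (i : Fin n) : 0 < mu i := hmu i trivial
    exact ⟨mact_mem_frakS (iArrow_mem_frakS hlam hmu) g, sign_krylovDet_mact_iArrow hlam hmu g⟩

end Components

/-- `𝔖` has exactly two connected components, interchanged by conjugation
by any `g ∈ GL_n(ℝ)` with `det g < 0`. -/
theorem stmt5 (n : ℕ) (hn : 0 < n) :
    Set.ncard {C : Set (Matrix (Fin (n+1)) (Fin (n+1)) ℂ) |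
        ∃ y ∈ frakS n, C = connectedComponentIn (frakS n) y} = 2 ∧
    ∀ g : GL (Fin n) ℝ, (g : Matrix (Fin n) (Fin n) ℝ).det < 0 →
      ∀ y ∈ frakS n,
        connectedComponentIn (frakS n) (mact g y) ≠ connectedComponentIn (frakS n) y := by
  have hcont : ContinuousOn krylovDet (frakS n) := continuous_krylovDet.continuousOn
  have hne : ∀ y ∈ frakS n, krylovDet y ≠ 0 := fun _ => krylovDet_ne_zero
  constructor
  · have : Nonempty (Fin n) := Fin.pos_iff_nonempty.1 hn
    obtain ⟨y, hy, hpos⟩ := exists_mem_frakS_krylovDet_pos (n := n)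
    obtain ⟨g, hg⟩ := GeneralLinearGroup.det_surjective (n := Fin n) (-1 : ℝˣ)
    have hneg : krylovDet (mact g y) < 0 := by
      have hdet : g.val.det = -1 := congrArg Units.val hg
      rw [krylovDet_mact hy.1, hdet]
      linarith
    exact ncard_connectedComponentIn_eq_two hcont hne isPreconnected_setOf_sign_krylovDet_eq
      hy hpos (mact_mem_frakS hy g) hneg
  · intro g hg y hy heq
    have hsign := sign_eq_of_mem_connectedComponentIn hcont hne
      (heq ▸ mem_connectedComponentIn (mact_mem_frakS hy g))
    rw [krylovDet_mact hy.1, sign_mul, sign_neg hg, mul_eq_right₀ (sign_ne_zero.2 (hne y hy))]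
      at hsign
    exact absurd hsign (by decide)

end
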